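/- Let 0 < λ < μ₁ with λD < 1 and set α₁ = μ₁ − λ. Then the probability p(B) that a packet is queued only at the first system of the M/M/1–M/D/1 tandem satisfies (λ/μ₁) · [ (1 − λD) e^{−μ₁D} + ∫₀^∞ e^{−μ₁(w+D)} f_W(w) dw ] = (1 − λD)(λ/μ₁) e^{−μ₁D} ( 1 + λ(e^{μ₁D} − 1)/(α₁ e^{μ₁D} + λ) ). -/

import Mathlib

open Real MeasureTheory Filter

/-- Stationary waiting-time CDF of the M/D/1 queue (Erlang's formula),
extended by `0` on the negative reals. -/
noncomputable def PW (lam D w : ℝ) : ℝ :=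
  if w < 0 then 0 else
    (1 - lam * D) * ∑ k ∈ Finset.range (⌊w / D⌋₊ + 1),
      (-(lam * (w - (k : ℝ) * D))) ^ k * Real.exp (lam * (w - (k : ℝ) * D)) /
        (Nat.factorial k)

/-- Continuous part of the stationary waiting-time density of the M/D/1 queue. -/
noncomputable def fW (lam D w : ℝ) : ℝ :=
  (1 - lam * D) * (lam * Real.exp (lam * w) +
    ∑ k ∈ Finset.Icc 1 ⌊w / D⌋₊,
      (-lam) ^ k * (w - (k : ℝ) * D) ^ (k - 1) * Real.exp (lam * (w - (k : ℝ) * D)) *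
        ((k : ℝ) + lam * (w - (k : ℝ) * D)) / (Nat.factorial k))

/-!
Let `E w` be Erlang's series, normalised so that `E 0 = 1`. It solves the delay equation
`E' w = lam * (E w - E (w - D))` for right derivatives, whose integrated form is
`E w = 1 + lam * ∫ v in (w - D)..w, E v`. After multiplication by `exp (-s * w)` this is a renewal
equation `f = b + κ ⋆ f` with `∫ |κ| = |lam| * (1 - exp (-s * D)) / s`. If this mass is less
than `1`, then `f` is integrable, so that integrating the equation determines the Laplace transform
`1 / (s - lam * (1 - exp (-s * D)))` of `E`. The density `fW` is
`(1 - lam * D) * lam * (E w - E (w - D))`, so its Laplace transform at `μ₁` follows.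
-/

open Set Convolution
open ContinuousLinearMap (lsmul)

section Renewal

variable {E : Type*} [NormedAddCommGroup E] [NormedSpace ℝ E]

lemma integral_norm_convolution_le {κ : ℝ → ℝ} {f : ℝ → E} (hκ : Integrable κ)
    (hf : Integrable f) :
    ∫ w, ‖(κ ⋆[lsmul ℝ ℝ] f) w‖ ≤ (∫ v, ‖κ v‖) * ∫ w, ‖f w‖ := by
  have hnorm : Integrable ((fun v => ‖κ v‖) ⋆[lsmul ℝ ℝ] fun w => ‖f w‖) :=
    hκ.norm.integrable_convolution _ hf.norm
  calc ∫ w, ‖(κ ⋆[lsmul ℝ ℝ] f) w‖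
    _ ≤ ∫ w, ((fun v => ‖κ v‖) ⋆[lsmul ℝ ℝ] fun w => ‖f w‖) w := by
        refine integral_mono (hκ.integrable_convolution _ hf).norm hnorm fun w => ?_
        simpa only [convolution_lsmul, norm_smul, smul_eq_mul] using
          norm_integral_le_integral_norm fun v => κ v • f (w - v)
    _ = (∫ v, ‖κ v‖) * ∫ w, ‖f w‖ := integral_convolution _ hκ.norm hf.norm

lemma convolution_indicator_Iic_eqOn {κ : ℝ → ℝ} (hκ : ∀ v < 0, κ v = 0) (f : ℝ → E) (T : ℝ) :
    EqOn (κ ⋆[lsmul ℝ ℝ] (Iic T).indicator f)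
      (κ ⋆[lsmul ℝ ℝ] f) (Iic T) := by
  intro w hw
  simp only [convolution_lsmul]
  congr 1 with v
  rcases lt_or_ge v 0 with hv | hv
  · simp only [hκ v hv, zero_smul]
  · rw [indicator_of_mem (show w - v ∈ Iic T from (sub_le_self w hv).trans hw)]

variable {κ : ℝ → ℝ} {f b : ℝ → E}

lemma integrableOn_Iic_convolution (hκ : Integrable κ) (hκ_neg : ∀ v < 0, κ v = 0) {T : ℝ}
    (hf : IntegrableOn f (Iic T)) :
    IntegrableOn (κ ⋆[lsmul ℝ ℝ] f) (Iic T) :=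
  (hκ.integrable_convolution _ (hf.integrable_indicator measurableSet_Iic)).integrableOn.congr_fun
    (convolution_indicator_Iic_eqOn hκ_neg f T) measurableSet_Iic

lemma setIntegral_Iic_norm_convolution_le (hκ : Integrable κ) (hκ_neg : ∀ v < 0, κ v = 0)
    {T : ℝ} (hf : IntegrableOn f (Iic T)) :
    ∫ w in Iic T, ‖(κ ⋆[lsmul ℝ ℝ] f) w‖ ≤
      (∫ v, ‖κ v‖) * ∫ w in Iic T, ‖f w‖ := by
  have hfT : Integrable ((Iic T).indicator f) := hf.integrable_indicator measurableSet_Iic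
  calc ∫ w in Iic T, ‖(κ ⋆[lsmul ℝ ℝ] f) w‖
    _ = ∫ w in Iic T, ‖(κ ⋆[lsmul ℝ ℝ] (Iic T).indicator f) w‖ :=
        setIntegral_congr_fun measurableSet_Iic fun w hw =>
          congrArg norm (convolution_indicator_Iic_eqOn hκ_neg f T hw).symm
    _ ≤ ∫ w, ‖(κ ⋆[lsmul ℝ ℝ] (Iic T).indicator f) w‖ :=
        setIntegral_le_integral (hκ.integrable_convolution _ hfT).norm
          (ae_of_all _ fun _ => norm_nonneg _)
    _ ≤ (∫ v, ‖κ v‖) * ∫ w, ‖(Iic T).indicator f w‖ := integral_norm_convolution_le hκ hfT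
    _ = (∫ v, ‖κ v‖) * ∫ w in Iic T, ‖f w‖ := by
        simp only [norm_indicator_eq_indicator_norm, integral_indicator measurableSet_Iic]

lemma integrable_of_eq_add_convolution (hκ : Integrable κ) (hκ_neg : ∀ v < 0, κ v = 0)
    (hκ_lt : ∫ v, ‖κ v‖ < 1) (hb : Integrable b) (hf : ∀ T, IntegrableOn f (Iic T))
    (hfb : f = b + κ ⋆[lsmul ℝ ℝ] f) : Integrable f := by
  refine (aecover_Iic tendsto_id).integrable_of_integral_norm_bounded
    ((∫ w, ‖b w‖) / (1 - ∫ v, ‖κ v‖)) hf (Eventually.of_forall fun T => ?_)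
  rw [id, le_div_iff₀ (sub_pos.2 hκ_lt)]
  have hconv := integrableOn_Iic_convolution hκ hκ_neg (hf T)
  have hle : ∫ w in Iic T, ‖f w‖ ≤ (∫ w, ‖b w‖) + (∫ v, ‖κ v‖) * ∫ w in Iic T, ‖f w‖ :=
    calc ∫ w in Iic T, ‖f w‖
      _ ≤ ∫ w in Iic T, (‖b w‖ + ‖(κ ⋆[lsmul ℝ ℝ] f) w‖) :=
          integral_mono (hf T).norm (hb.integrableOn.norm.add hconv.norm) fun w =>
            (congrArg norm (congrFun hfb w)).trans_le (norm_add_le _ _)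
      _ = (∫ w in Iic T, ‖b w‖) + ∫ w in Iic T, ‖(κ ⋆[lsmul ℝ ℝ] f) w‖ :=
          integral_add hb.integrableOn.norm hconv.norm
      _ ≤ (∫ w, ‖b w‖) + (∫ v, ‖κ v‖) * ∫ w in Iic T, ‖f w‖ :=
          add_le_add (setIntegral_le_integral hb.norm (ae_of_all _ fun _ => norm_nonneg _))
            (setIntegral_Iic_norm_convolution_le hκ hκ_neg (hf T))
  linarith

lemma integral_eq_add_smul_of_eq_add_convolution [CompleteSpace E] (hκ : Integrable κ)
    (hb : Integrable b) (hf : Integrable f)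
    (hfb : f = b + κ ⋆[lsmul ℝ ℝ] f) :
    ∫ w, f w = (∫ w, b w) + (∫ v, κ v) • ∫ w, f w := by
  conv_lhs => rw [hfb]
  exact (integral_add hb (hκ.integrable_convolution _ hf)).trans
    (congrArg _ (integral_convolution _ hκ hf))

end Renewal

section Erlang

variable {lam D s w : ℝ}

lemma lt_floor_div_add_one_mul (hD : 0 < D) (w : ℝ) : w < (⌊w / D⌋₊ + 1) * D :=
  (div_lt_iff₀ hD).1 (Nat.lt_floor_add_one _)

lemma hasDerivWithinAt_Ici_indicator_Ici {F : Type*} [NormedAddCommGroup F] [NormedSpace ℝ F]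
    {f : ℝ → F} {f' : F} {a x : ℝ} (hf : HasDerivAt f f' x) :
    HasDerivWithinAt ((Ici a).indicator f) ((Ici a).indicator (fun _ => f') x) (Ici x) x := by
  rcases lt_or_ge x a with hx | hx
  · rw [indicator_of_notMem (notMem_Ici.2 hx)]
    refine ((hasDerivAt_const x (0 : F)).congr_of_eventuallyEq ?_).hasDerivWithinAt
    filter_upwards [Iio_mem_nhds hx] with y hy using indicator_of_notMem (notMem_Ici.2 hy) _
  · rw [indicator_of_mem (mem_Ici.2 hx)]
    exact hf.hasDerivWithinAt.congr (fun y hy => indicator_of_mem (mem_Ici.2 (hx.trans hy)) _)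
      (indicator_of_mem (mem_Ici.2 hx) _)

lemma integrable_indicator_Ici_exp (hs : 0 < s) :
    Integrable ((Ici 0).indicator fun w => Real.exp (-s * w)) := by
  rw [integrable_indicator_iff measurableSet_Ici, integrableOn_Ici_iff_integrableOn_Ioi]
  exact integrableOn_exp_mul_Ioi (neg_neg_of_pos hs) 0

lemma integral_indicator_Ici_exp (hs : 0 < s) :
    ∫ w, (Ici 0).indicator (fun w => Real.exp (-s * w)) w = 1 / s := by
  rw [integral_indicator measurableSet_Ici, integral_Ici_eq_integral_Ioi,
    integral_exp_mul_Ioi (neg_neg_of_pos hs), mul_zero, Real.exp_zero, neg_div_neg_eq]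

lemma exp_mul_comp_sub (s D : ℝ) (G : ℝ → ℝ) (w : ℝ) :
    Real.exp (-s * w) * G (w - D) =
      Real.exp (-s * D) * (Real.exp (-s * (w - D)) * G (w - D)) := by
  rw [← mul_assoc, ← Real.exp_add]
  ring_nf

lemma sub_mul_one_sub_exp_pos (hD : 0 ≤ D) (hs : 0 ≤ s)
    (hlam : |lam| * (1 - Real.exp (-s * D)) < s) : 0 < s - lam * (1 - Real.exp (-s * D)) := by
  have hexp : 0 ≤ 1 - Real.exp (-s * D) := sub_nonneg.2 <| Real.exp_le_one_iff.2 <| by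
    rw [neg_mul]; exact neg_nonpos.2 (mul_nonneg hs hD)
  linarith [mul_le_mul_of_nonneg_right (le_abs_self lam) hexp]

/-- The `k`-th term of Erlang's series for the M/D/1 waiting time, as a function of
`u = w - k * D` and cut off at `u < 0`. -/
noncomputable def erlangTerm (lam : ℝ) (k : ℕ) : ℝ → ℝ :=
  (Ici 0).indicator fun u => (-(lam * u)) ^ k * Real.exp (lam * u) / k.factorial

/-- Erlang's series for the M/D/1 waiting-time distribution, normalised to be `1` at `0`: it is
`PW` without the factor `1 - lam * D`. The cut-off in `erlangTerm` makes the sum finite. -/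
noncomputable def erlangSeries (lam D w : ℝ) : ℝ :=
  ∑' k : ℕ, erlangTerm lam k (w - k * D)

lemma erlangTerm_of_neg (lam : ℝ) (k : ℕ) {u : ℝ} (hu : u < 0) : erlangTerm lam k u = 0 :=
  indicator_of_notMem (notMem_Ici.2 hu) _

lemma erlangTerm_of_nonneg (lam : ℝ) (k : ℕ) {u : ℝ} (hu : 0 ≤ u) :
    erlangTerm lam k u = (-(lam * u)) ^ k * Real.exp (lam * u) / k.factorial :=
  indicator_of_mem (mem_Ici.2 hu) _

lemma hasDerivWithinAt_erlangTerm_zero (lam u : ℝ) :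
    HasDerivWithinAt (erlangTerm lam 0) (lam * erlangTerm lam 0 u) (Ici u) u := by
  have hlin : HasDerivAt (fun u : ℝ => lam * u) lam u := by
    simpa using (hasDerivAt_id u).const_mul lam
  have hterm := ((hlin.neg.pow 0).mul hlin.exp).div_const (Nat.factorial 0 : ℝ)
  refine (hasDerivWithinAt_Ici_indicator_Ici (a := 0) hterm).congr_deriv ?_
  rcases lt_or_ge u 0 with hu | hu
  · rw [indicator_of_notMem (notMem_Ici.2 hu), erlangTerm_of_neg lam 0 hu, mul_zero]
  · rw [indicator_of_mem (mem_Ici.2 hu), erlangTerm_of_nonneg lam 0 hu]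
    simp [mul_comm]

lemma hasDerivWithinAt_erlangTerm_succ (lam : ℝ) (k : ℕ) (u : ℝ) :
    HasDerivWithinAt (erlangTerm lam (k + 1))
      (lam * (erlangTerm lam (k + 1) u - erlangTerm lam k u)) (Ici u) u := by
  have hlin : HasDerivAt (fun u : ℝ => lam * u) lam u := by
    simpa using (hasDerivAt_id u).const_mul lam
  have hterm := ((hlin.neg.pow (k + 1)).mul hlin.exp).div_const ((k + 1).factorial : ℝ)
  refine (hasDerivWithinAt_Ici_indicator_Ici (a := 0) hterm).congr_deriv ?_
  rcases lt_or_ge u 0 with hu | hu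
  · simp only [indicator_of_notMem (notMem_Ici.2 hu), erlangTerm_of_neg _ _ hu, sub_zero, mul_zero]
  · rw [indicator_of_mem (mem_Ici.2 hu), erlangTerm_of_nonneg _ _ hu, erlangTerm_of_nonneg _ _ hu,
      Nat.factorial_succ]
    simp only [Nat.add_sub_cancel, Pi.neg_apply, Pi.pow_apply]
    push_cast
    field_simp
    ring

lemma continuousOn_erlangTerm_zero (lam : ℝ) : ContinuousOn (erlangTerm lam 0) (Ici 0) :=
  ContinuousOn.congr (f := fun u => Real.exp (lam * u)) (by fun_prop) fun u hu => by
    simp [erlangTerm_of_nonneg lam 0 hu]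

lemma continuous_erlangTerm_succ (lam : ℝ) (k : ℕ) : Continuous (erlangTerm lam (k + 1)) := by
  refine continuous_indicator (fun u hu => ?_) (by fun_prop)
  rw [frontier_Ici, mem_singleton_iff] at hu
  simp [hu]

lemma erlangSeries_eq_sum_range (lam : ℝ) (hD : 0 ≤ D) {N : ℕ} (hw : w < N * D) :
    erlangSeries lam D w = ∑ k ∈ Finset.range N, erlangTerm lam k (w - k * D) := by
  refine tsum_eq_sum fun k hk => erlangTerm_of_neg lam k (sub_neg.2 (hw.trans_le ?_))
  gcongr
  simpa using hk

lemma erlangSeries_of_neg (lam : ℝ) (hD : 0 ≤ D) (hw : w < 0) : erlangSeries lam D w = 0 := by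
  simpa using erlangSeries_eq_sum_range lam hD (N := 0) (by simpa using hw)

lemma erlangSeries_zero (lam : ℝ) (hD : 0 < D) : erlangSeries lam D 0 = 1 := by
  rw [erlangSeries_eq_sum_range lam hD.le (N := 1) (by simpa using hD)]
  simp [erlangTerm_of_nonneg]

lemma erlangSeries_eq_add_sum_range (lam : ℝ) (hD : 0 ≤ D) {N : ℕ} (hw : w < (N + 1) * D) :
    erlangSeries lam D w =
      erlangTerm lam 0 w + ∑ k ∈ Finset.range N, erlangTerm lam (k + 1) (w - (k + 1) * D) := by
  rw [erlangSeries_eq_sum_range lam hD (N := N + 1) (by exact_mod_cast hw),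
    Finset.sum_range_succ', add_comm]
  simp only [Nat.cast_add, Nat.cast_one, Nat.cast_zero, zero_mul, sub_zero]

lemma erlangSeries_sub_eq_sum_range (lam : ℝ) (hD : 0 ≤ D) {N : ℕ} (hw : w < (N + 1) * D) :
    erlangSeries lam D w - erlangSeries lam D (w - D) = erlangTerm lam 0 w +
      ∑ k ∈ Finset.range N,
        (erlangTerm lam (k + 1) (w - (k + 1) * D) - erlangTerm lam k (w - (k + 1) * D)) := by
  have hshift (k : ℕ) : w - D - k * D = w - (k + 1) * D := by ring
  rw [erlangSeries_eq_add_sum_range lam hD hw,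
    erlangSeries_eq_sum_range lam hD (N := N) (by linarith), Finset.sum_sub_distrib]
  simp only [hshift]
  ring

lemma hasDerivWithinAt_erlangSeries (lam : ℝ) (hD : 0 < D) (w : ℝ) :
    HasDerivWithinAt (erlangSeries lam D)
      (lam * (erlangSeries lam D w - erlangSeries lam D (w - D))) (Ici w) w := by
  obtain ⟨N, hN⟩ : ∃ N : ℕ, w < (N + 1) * D := ⟨_, lt_floor_div_add_one_mul hD w⟩
  have hterm (k : ℕ) : HasDerivWithinAt (fun y => erlangTerm lam (k + 1) (y - (k + 1) * D))
      (lam * (erlangTerm lam (k + 1) (w - (k + 1) * D) - erlangTerm lam k (w - (k + 1) * D)))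
      (Ici w) w := by
    have hshift : HasDerivWithinAt (fun y : ℝ => y - (k + 1) * D) 1 (Ici w) w :=
      (hasDerivWithinAt_id w _).sub_const _
    have hmaps : MapsTo (fun y : ℝ => y - (k + 1) * D) (Ici w) (Ici (w - (k + 1) * D)) :=
      fun y hy => sub_le_sub_right (mem_Ici.1 hy) _
    exact ((hasDerivWithinAt_erlangTerm_succ lam k _).comp w hshift hmaps).congr_deriv (mul_one _)
  have hsum := (hasDerivWithinAt_erlangTerm_zero lam w).add
    (HasDerivWithinAt.fun_sum (u := Finset.range N) fun k _ => hterm k)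
  refine (hsum.congr_of_eventuallyEq_of_mem ?_ self_mem_Ici).congr_deriv ?_
  · filter_upwards [mem_nhdsWithin_of_mem_nhds (Iio_mem_nhds hN)] with y hy
    exact erlangSeries_eq_add_sum_range lam hD.le hy
  · rw [erlangSeries_sub_eq_sum_range lam hD.le hN, mul_add, Finset.mul_sum]

lemma continuousOn_erlangSeries (lam : ℝ) (hD : 0 < D) :
    ContinuousOn (erlangSeries lam D) (Ici 0) := by
  intro w hw
  obtain ⟨N, hN⟩ : ∃ N : ℕ, w < (N + 1) * D := ⟨_, lt_floor_div_add_one_mul hD w⟩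
  have hsum : Continuous fun y =>
      ∑ k ∈ Finset.range N, erlangTerm lam (k + 1) (y - (k + 1) * D) :=
    continuous_finsetSum _ fun k _ => (continuous_erlangTerm_succ lam k).comp (by fun_prop)
  refine ContinuousWithinAt.congr_of_eventuallyEq_of_mem
    ((continuousOn_erlangTerm_zero lam).add hsum.continuousOn w hw) ?_ hw
  filter_upwards [mem_nhdsWithin_of_mem_nhds (Iio_mem_nhds hN)] with y hy
  exact erlangSeries_eq_add_sum_range lam hD.le hy

lemma integrableOn_Iic_mul_erlangSeries (lam : ℝ) (hD : 0 < D) {g : ℝ → ℝ}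
    (hg : ContinuousOn g (Ici 0)) (T : ℝ) :
    IntegrableOn (fun w => g w * erlangSeries lam D w) (Iic T) := by
  have hind : (Ici 0).indicator (fun w => g w * erlangSeries lam D w) =
      fun w => g w * erlangSeries lam D w :=
    indicator_eq_self.2 fun w => not_imp_comm.1 fun hw => by
      simp only [erlangSeries_of_neg lam hD.le (notMem_Ici.1 hw), mul_zero]
  rw [← hind, integrableOn_indicator_iff measurableSet_Ici, Ici_inter_Iic]
  exact ((hg.mul (continuousOn_erlangSeries lam hD)).mono Icc_subset_Ici_self).integrableOn_Icc

lemma intervalIntegrable_erlangSeries (lam : ℝ) (hD : 0 < D) (a b : ℝ) :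
    IntervalIntegrable (erlangSeries lam D) volume a b := by
  have h := integrableOn_Iic_mul_erlangSeries lam hD (g := fun _ => 1) continuousOn_const (max a b)
  simp only [one_mul] at h
  exact intervalIntegrable_iff.2 (h.mono_set fun w hw => hw.2)

lemma erlangSeries_eq_one_add_integral (lam : ℝ) (hD : 0 < D) (hw : 0 ≤ w) :
    erlangSeries lam D w = 1 + lam * ∫ v in (w - D)..w, erlangSeries lam D v := by
  have hint := intervalIntegrable_erlangSeries lam hD
  have hdelay : IntervalIntegrable (fun v => erlangSeries lam D (v - D)) volume 0 w := by
    simpa using (hint (0 - D) (w - D)).comp_sub_right D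
  have hneg : ∫ v in (0 - D)..0, erlangSeries lam D v = 0 := by
    rw [intervalIntegral.integral_of_le (by linarith), integral_Ioc_eq_integral_Ioo]
    exact setIntegral_eq_zero_of_forall_eq_zero fun v hv => erlangSeries_of_neg lam hD.le hv.2
  have hFTC : ∫ v in 0..w, lam * (erlangSeries lam D v - erlangSeries lam D (v - D)) =
      erlangSeries lam D w - 1 := by
    rw [← erlangSeries_zero lam hD]
    exact intervalIntegral.integral_eq_sub_of_hasDeriv_right_of_le hw
      ((continuousOn_erlangSeries lam hD).mono Icc_subset_Ici_self)
      (fun v _ => (hasDerivWithinAt_erlangSeries lam hD v).mono Ioi_subset_Ici_self)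
      (((hint 0 w).sub hdelay).const_mul lam)
  have hwindow : (∫ v in 0..w, erlangSeries lam D v) - ∫ v in 0..w, erlangSeries lam D (v - D) =
      ∫ v in (w - D)..w, erlangSeries lam D v := by
    rw [intervalIntegral.integral_comp_sub_right,
      intervalIntegral.integral_interval_sub_interval_comm' (hint _ _) (hint _ _) (hint _ _),
      hneg, sub_zero]
  rw [intervalIntegral.integral_const_mul, intervalIntegral.integral_sub (hint 0 w) hdelay,
    hwindow] at hFTC
  linear_combination -hFTC

lemma fW_eq_erlangSeries_sub (lam : ℝ) (hD : 0 < D) (hw : 0 ≤ w) :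
    fW lam D w =
      (1 - lam * D) * lam * (erlangSeries lam D w - erlangSeries lam D (w - D)) := by
  have hterm : ∀ k ∈ Finset.range ⌊w / D⌋₊,
      (-lam) ^ (k + 1) * (w - (k + 1 : ℕ) * D) ^ k * Real.exp (lam * (w - (k + 1 : ℕ) * D)) *
          ((k + 1 : ℕ) + lam * (w - (k + 1 : ℕ) * D)) / (k + 1).factorial =
        lam * (erlangTerm lam (k + 1) (w - (k + 1) * D) -
          erlangTerm lam k (w - (k + 1) * D)) := by
    intro k hk
    have hu : 0 ≤ w - (k + 1) * D := by
      rw [sub_nonneg, ← le_div_iff₀ hD]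
      exact_mod_cast (Nat.le_floor_iff (by positivity)).1 (Finset.mem_range.1 hk)
    rw [erlangTerm_of_nonneg _ _ hu, erlangTerm_of_nonneg _ _ hu, Nat.factorial_succ]
    push_cast
    generalize w - (k + 1) * D = u
    rw [neg_mul_eq_neg_mul, mul_pow, mul_pow]
    field_simp
    ring
  rw [erlangSeries_sub_eq_sum_range lam hD.le (lt_floor_div_add_one_mul hD w), mul_assoc,
    mul_add lam, Finset.mul_sum, ← Finset.sum_congr rfl hterm, fW, erlangTerm_of_nonneg lam 0 hw,
    Finset.range_eq_Ico, ← Finset.Ico_add_one_right_eq_Icc]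
  simp [← Finset.sum_Ico_add' _ 0 _ 1]

/-- The kernel `lam * 1_(0, D]` of the renewal equation `erlangSeries_eq_one_add_integral`
(`lam * D` times the law of the residual service time), multiplied by the discount
`exp (-s * v)`. -/
noncomputable def renewalKernel (lam D s : ℝ) : ℝ → ℝ :=
  (Ioc 0 D).indicator fun v => lam * Real.exp (-s * v)

lemma renewalKernel_of_neg (lam D s : ℝ) {v : ℝ} (hv : v < 0) : renewalKernel lam D s v = 0 :=
  indicator_of_notMem (fun h => hv.not_gt h.1) _

lemma norm_renewalKernel (lam D s v : ℝ) :
    ‖renewalKernel lam D s v‖ = renewalKernel |lam| D s v := by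
  simp [renewalKernel, norm_indicator_eq_indicator_norm]

lemma integrable_renewalKernel (lam D s : ℝ) : Integrable (renewalKernel lam D s) := by
  rw [renewalKernel, integrable_indicator_iff measurableSet_Ioc]
  exact (Continuous.integrableOn_Icc (by fun_prop)).mono_set Ioc_subset_Icc_self

lemma integral_renewalKernel (lam : ℝ) (hD : 0 ≤ D) (hs : s ≠ 0) :
    ∫ v, renewalKernel lam D s v = lam * (1 - Real.exp (-s * D)) / s := by
  rw [renewalKernel, integral_indicator measurableSet_Ioc,
    ← intervalIntegral.integral_of_le hD, intervalIntegral.integral_const_mul,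
    intervalIntegral.integral_comp_mul_left _ (neg_ne_zero.2 hs), integral_exp, mul_zero,
    Real.exp_zero, smul_eq_mul]
  field_simp
  ring

lemma renewalKernel_convolution_exp_mul_apply (lam s : ℝ) (hD : 0 ≤ D) (G : ℝ → ℝ) (w : ℝ) :
    (renewalKernel lam D s ⋆[lsmul ℝ ℝ] fun w => Real.exp (-s * w) * G w) w =
      Real.exp (-s * w) * (lam * ∫ v in (w - D)..w, G v) := by
  have hpoint (v : ℝ) :
      renewalKernel lam D s v • (Real.exp (-s * (w - v)) * G (w - v)) =
        (Ioc 0 D).indicator (fun v => Real.exp (-s * w) * lam * G (w - v)) v := by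
    by_cases hv : v ∈ Ioc 0 D
    · have hexp : Real.exp (-s * w) = Real.exp (-s * v) * Real.exp (-s * (w - v)) := by
        rw [← Real.exp_add]; ring_nf
      rw [renewalKernel, indicator_of_mem hv, indicator_of_mem hv, hexp, smul_eq_mul]
      ring
    · rw [renewalKernel, indicator_of_notMem hv, indicator_of_notMem hv, zero_smul]
  simp only [convolution_lsmul, hpoint]
  rw [integral_indicator measurableSet_Ioc, ← intervalIntegral.integral_of_le hD,
    intervalIntegral.integral_const_mul, intervalIntegral.integral_comp_sub_left, sub_zero,
    mul_assoc]

lemma exp_mul_erlangSeries_eq_add_convolution (lam s : ℝ) (hD : 0 < D) :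
    (fun w => Real.exp (-s * w) * erlangSeries lam D w) =
      (Ici 0).indicator (fun w => Real.exp (-s * w)) +
        renewalKernel lam D s ⋆[lsmul ℝ ℝ] fun w => Real.exp (-s * w) * erlangSeries lam D w := by
  ext w
  rw [Pi.add_apply, renewalKernel_convolution_exp_mul_apply lam s hD.le]
  rcases lt_or_ge w 0 with hw | hw
  · have hzero : ∫ v in (w - D)..w, erlangSeries lam D v = 0 := by
      rw [intervalIntegral.integral_of_le (by linarith)]
      exact setIntegral_eq_zero_of_forall_eq_zero fun v hv =>
        erlangSeries_of_neg lam hD.le (hv.2.trans_lt hw)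
    rw [indicator_of_notMem (notMem_Ici.2 hw), erlangSeries_of_neg lam hD.le hw, hzero]
    ring
  · rw [indicator_of_mem (mem_Ici.2 hw)]
    conv_lhs => rw [erlangSeries_eq_one_add_integral lam hD hw, mul_add, mul_one]

lemma integrable_exp_mul_erlangSeries (hD : 0 < D) (hs : 0 < s)
    (hlam : |lam| * (1 - Real.exp (-s * D)) < s) :
    Integrable fun w => Real.exp (-s * w) * erlangSeries lam D w := by
  refine integrable_of_eq_add_convolution (integrable_renewalKernel lam D s)
    (fun v => renewalKernel_of_neg lam D s) ?_ (integrable_indicator_Ici_exp hs)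
    (integrableOn_Iic_mul_erlangSeries lam hD (by fun_prop))
    (exp_mul_erlangSeries_eq_add_convolution lam s hD)
  simp only [norm_renewalKernel]
  rwa [integral_renewalKernel _ hD.le hs.ne', div_lt_one hs]

lemma integral_exp_mul_erlangSeries (hD : 0 < D) (hs : 0 < s)
    (hlam : |lam| * (1 - Real.exp (-s * D)) < s) :
    ∫ w, Real.exp (-s * w) * erlangSeries lam D w = 1 / (s - lam * (1 - Real.exp (-s * D))) := by
  have hrenewal := integral_eq_add_smul_of_eq_add_convolution (integrable_renewalKernel lam D s)
    (integrable_indicator_Ici_exp hs) (integrable_exp_mul_erlangSeries hD hs hlam)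
    (exp_mul_erlangSeries_eq_add_convolution lam s hD)
  rw [integral_indicator_Ici_exp hs, integral_renewalKernel lam hD.le hs.ne', smul_eq_mul]
    at hrenewal
  rw [eq_div_iff (sub_mul_one_sub_exp_pos hD.le hs.le hlam).ne']
  generalize ∫ w, Real.exp (-s * w) * erlangSeries lam D w = L at hrenewal ⊢
  linear_combination s * hrenewal +
    (1 + lam * (1 - Real.exp (-s * D)) * L) * mul_inv_cancel₀ hs.ne'

lemma integral_exp_mul_erlangSeries_sub (hD : 0 < D) (hs : 0 < s)
    (hlam : |lam| * (1 - Real.exp (-s * D)) < s) :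
    ∫ w, Real.exp (-s * w) * (erlangSeries lam D w - erlangSeries lam D (w - D)) =
      (1 - Real.exp (-s * D)) / (s - lam * (1 - Real.exp (-s * D))) := by
  have hint := integrable_exp_mul_erlangSeries hD hs hlam
  simp only [mul_sub (Real.exp _), exp_mul_comp_sub s D (erlangSeries lam D)]
  rw [integral_sub hint ((hint.comp_sub_right D).const_mul _), integral_const_mul,
    integral_sub_right_eq_self (fun w => Real.exp (-s * w) * erlangSeries lam D w),
    integral_exp_mul_erlangSeries hD hs hlam]
  ring

lemma integral_Ioi_exp_mul_fW (hD : 0 < D) (hs : 0 < s)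
    (hlam : |lam| * (1 - Real.exp (-s * D)) < s) :
    ∫ w in Ioi 0, Real.exp (-s * w) * fW lam D w =
      (1 - lam * D) *
        (lam * (1 - Real.exp (-s * D)) / (s - lam * (1 - Real.exp (-s * D)))) := by
  calc ∫ w in Ioi 0, Real.exp (-s * w) * fW lam D w
    _ = ∫ w in Ici 0, (1 - lam * D) * lam *
          (Real.exp (-s * w) * (erlangSeries lam D w - erlangSeries lam D (w - D))) := by
        rw [integral_Ici_eq_integral_Ioi]
        refine setIntegral_congr_fun measurableSet_Ioi fun w hw => ?_
        simp only [fW_eq_erlangSeries_sub lam hD (mem_Ioi.1 hw).le]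
        ring
    _ = (1 - lam * D) * lam *
          ∫ w, Real.exp (-s * w) * (erlangSeries lam D w - erlangSeries lam D (w - D)) := by
        rw [setIntegral_eq_integral_of_forall_compl_eq_zero, integral_const_mul]
        intro w hw
        rw [erlangSeries_of_neg lam hD.le (notMem_Ici.1 hw),
          erlangSeries_of_neg lam hD.le (by linarith [notMem_Ici.1 hw])]
        ring
    _ = _ := by
        rw [integral_exp_mul_erlangSeries_sub hD hs hlam]
        ring

end Erlang

theorem md1_tandem_pB_general (lam D μ₁ α₁ : ℝ) (hD : 0 < D) (hμ₁ : 0 < μ₁)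
    (hlam : |lam| * (1 - Real.exp (-μ₁ * D)) < μ₁) (hα₁ : α₁ = μ₁ - lam) :
    lam / μ₁ * ((1 - lam * D) * Real.exp (-μ₁ * D) +
        ∫ w in Set.Ioi (0:ℝ), Real.exp (-μ₁ * (w + D)) * fW lam D w) =
      (1 - lam * D) * (lam / μ₁) * Real.exp (-μ₁ * D) *
        (1 + lam * (Real.exp (μ₁ * D) - 1) / (α₁ * Real.exp (μ₁ * D) + lam)) := by
  have hratio : lam * (Real.exp (μ₁ * D) - 1) / (α₁ * Real.exp (μ₁ * D) + lam) =
      lam * (1 - Real.exp (-μ₁ * D)) / (μ₁ - lam * (1 - Real.exp (-μ₁ * D))) := by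
    have hexp : Real.exp (μ₁ * D) * Real.exp (-μ₁ * D) = 1 := by
      rw [← Real.exp_add, ← add_mul, add_neg_cancel, zero_mul, Real.exp_zero]
    rw [← mul_div_mul_left (lam * (1 - Real.exp (-μ₁ * D))) _ (Real.exp_pos (μ₁ * D)).ne', hα₁]
    congr 1
    · linear_combination lam * hexp
    · linear_combination -lam * hexp
  have hshift (w : ℝ) : Real.exp (-μ₁ * (w + D)) * fW lam D w =
      Real.exp (-μ₁ * D) * (Real.exp (-μ₁ * w) * fW lam D w) := by
    rw [mul_add, Real.exp_add]
    ring
  simp only [hshift]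
  rw [integral_const_mul, integral_Ioi_exp_mul_fW hD hμ₁ hlam, hratio]
  ring

/-- probability `p(B)` that a packet of the M/M/1 – M/D/1 tandem is
queued only at the first system. -/
theorem md1_tandem_pB (lam D μ₁ α₁ : ℝ) (hlam : 0 < lam) (hμ₁ : lam < μ₁)
    (hD : 0 < D) (hstab : lam * D < 1) (hα₁ : α₁ = μ₁ - lam) :
    lam / μ₁ * ((1 - lam * D) * Real.exp (-μ₁ * D) +
        ∫ w in Set.Ioi (0:ℝ), Real.exp (-μ₁ * (w + D)) * fW lam D w) =
      (1 - lam * D) * (lam / μ₁) * Real.exp (-μ₁ * D) *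
        (1 + lam * (Real.exp (μ₁ * D) - 1) / (α₁ * Real.exp (μ₁ * D) + lam)) := by
  refine md1_tandem_pB_general lam D μ₁ α₁ hD (hlam.trans hμ₁) ?_ hα₁
  rw [abs_of_pos hlam]
  nlinarith [Real.exp_pos (-μ₁ * D)]
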